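/- Under the compact nonzero-sum game setup with the quantization condition lim_{δ→0} ω_δ(2δ) = 0, let T ∈ ℕ be the horizon and for each δ > 0 let π*_δ be a Markov perfect Nash equilibrium of the finite δ-model. Then for each player i = 1,…,N and each t = 0,…,T, sup_{x∈X} |J^i_t(π*_δ; x) − J*_t(π^{*,-i}_δ; x)| → 0 as δ → 0, where J^i_t(π*_δ;·) is the cost-to-go of player i at time t in the original model under the extended joint equilibrium policy and J*_t(π^{*,-i}_δ;·) is the original-model best-response value at time t against the extended policies of the other players. -/

import Mathlib

open MeasureTheory Filter Topology

noncomputable section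

/-- Total variation distance between two measures:
`‖μ − ν‖_TV = 2 sup_{D measurable} |μ(D) − ν(D)|`. -/
def tvDist {α : Type*} [MeasurableSpace α] (μ ν : Measure α) : ℝ :=
  2 * ⨆ D : {D : Set α // MeasurableSet D}, |(μ D.1).toReal - (ν D.1).toReal|

/-- The normalized restriction `ν^z_δ` of `ν` to the quantization cell `Q⁻¹{z}`. -/
def cellMeasure {X : Type*} [MeasurableSpace X] (ν : Measure X) (Q : X → X) (z : X) :
    Measure X :=
  (ν (Q ⁻¹' {z}))⁻¹ • ν.restrict (Q ⁻¹' {z})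

/-! Since the equilibrium mixed actions attain the minimum in the finite model, the finite-model
value `Ĵ*_{δ,t}` satisfies both a policy-evaluation and a best-response recursion. It is therefore
compared with the cost-to-go `J^i_t` and with the best-response value `J*_t`, by backward
induction. Only the continuation value of the finite model, which is constant on the cells, is
ever moved between nearby kernels, so the total variation of the *quantized* kernels controls the
error and no continuity of the original-model values is needed. Moving the action to the net and
the state within its cell are done one after the other, because together they could exceed `2δ`. -/

open scoped NNReal

section Bounds

variable {α : Type*} [MeasurableSpace α]

/-- Real functions that are measurable and bounded by `M` in absolute value: the class of
continuation values on which the Bellman operators act. -/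
structure IsBoundedMeasurable (f : α → ℝ) (M : ℝ) : Prop where
  measurable : Measurable f
  abs_le : ∀ x, |f x| ≤ M

lemma IsBoundedMeasurable.integrable {f : α → ℝ} {M : ℝ} (hf : IsBoundedMeasurable f M)
    (μ : Measure α) [IsFiniteMeasure μ] : Integrable f μ :=
  .of_bound hf.measurable.aestronglyMeasurable M (.of_forall hf.abs_le)

lemma abs_integral_le_of_ae_abs_le {μ : Measure α} [IsProbabilityMeasure μ] {f : α → ℝ} {M : ℝ}
    (hf : ∀ᵐ x ∂μ, |f x| ≤ M) : |∫ x, f x ∂μ| ≤ M := by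
  simpa using norm_integral_le_of_norm_le_const (f := f) hf

lemma abs_integral_sub_integral_le_of_ae {μ : Measure α} [IsProbabilityMeasure μ] {f g : α → ℝ}
    (hf : Integrable f μ) (hg : Integrable g μ) {K : ℝ} (h : ∀ᵐ x ∂μ, |f x - g x| ≤ K) :
    |∫ x, f x ∂μ - ∫ x, g x ∂μ| ≤ K := by
  rw [← integral_sub hf hg]
  exact abs_integral_le_of_ae_abs_le h

lemma abs_sub_integral_le_of_ae {μ : Measure α} [IsProbabilityMeasure μ] {f : α → ℝ}
    (hf : Integrable f μ) {r K : ℝ} (h : ∀ᵐ x ∂μ, |r - f x| ≤ K) : |r - ∫ x, f x ∂μ| ≤ K := by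
  simpa using abs_integral_sub_integral_le_of_ae (integrable_const r) hf h

end Bounds

lemma csInf_le_csInf_add {S U : Set ℝ} (hS : BddBelow S) (hU : U.Nonempty) {K : ℝ}
    (h : ∀ u ∈ U, ∃ s ∈ S, s ≤ u + K) : sInf S ≤ sInf U + K := by
  rw [← sub_le_iff_le_add]
  refine le_csInf hU fun u hu => ?_
  obtain ⟨s, hs, hsu⟩ := h u hu
  linarith [csInf_le hS hs]

lemma abs_csInf_sub_csInf_le {S U : Set ℝ} (hS : BddBelow S) (hS' : S.Nonempty) {K : ℝ}
    (hSU : ∀ s ∈ S, ∃ u ∈ U, |s - u| ≤ K) (hUS : ∀ u ∈ U, ∃ s ∈ S, |s - u| ≤ K) :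
    |sInf S - sInf U| ≤ K := by
  have hU : BddBelow U := by
    obtain ⟨b, hb⟩ := hS
    refine ⟨b - K, fun u hu => ?_⟩
    obtain ⟨s, hs, hsu⟩ := hUS u hu
    linarith [hb hs, (abs_sub_le_iff.1 hsu).1]
  have hU' : U.Nonempty := by
    obtain ⟨s, hs⟩ := hS'
    obtain ⟨u, hu, -⟩ := hSU s hs
    exact ⟨u, hu⟩
  refine abs_sub_le_iff.2 ⟨sub_le_iff_le_add'.2 ?_, sub_le_iff_le_add'.2 ?_⟩
  · refine csInf_le_csInf_add hS hU' fun u hu => ?_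
    obtain ⟨s, hs, hsu⟩ := hUS u hu
    exact ⟨s, hs, sub_le_iff_le_add'.1 (abs_sub_le_iff.1 hsu).1⟩
  · refine csInf_le_csInf_add hU hS' fun s hs => ?_
    obtain ⟨u, hu, hsu⟩ := hSU s hs
    exact ⟨u, hu, sub_le_iff_le_add'.1 (abs_sub_le_iff.1 hsu).2⟩

lemma backward_induction_linear {P : ℕ → ℝ → Prop} {T : ℕ} {C : ℝ} (terminal : P T 0)
    (step : ∀ t < T, ∀ K, P (t + 1) K → P t (C + K)) : ∀ t ≤ T, P t ((T - t) * C) := by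
  intro t ht
  induction ht using Nat.decreasingInduction with
  | self => simpa using terminal
  | of_succ t ht ih =>
    convert step t ht _ ih using 1
    push_cast
    ring

lemma isBoundedMeasurable_of_backward_step {X : Type*} [MeasurableSpace X] {T : ℕ} {C : ℝ≥0}
    {J : ℕ → X → ℝ} (terminal : ∀ x, J T x = 0)
    (step : ∀ t < T, ∀ M, IsBoundedMeasurable (J (t + 1)) M → IsBoundedMeasurable (J t) (C + M)) :
    ∀ t ≤ T, IsBoundedMeasurable (J t) (T * C) := by
  have hterminal : IsBoundedMeasurable (J T) 0 := by
    rw [funext terminal]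
    exact ⟨measurable_const, by simp⟩
  intro t ht
  have hJ := backward_induction_linear (P := fun t M => IsBoundedMeasurable (J t) M) hterminal step
    t ht
  refine ⟨hJ.measurable, fun x => (hJ.abs_le x).trans ?_⟩
  gcongr
  simp

lemma tendsto_zero_of_forall_eventually_le_mul {α : Type*} {l : Filter α} {F : α → ℝ} (L : ℝ)
    (hF : ∀ a, 0 ≤ F a) (h : ∀ η > 0, ∀ᶠ a in l, F a ≤ L * η) : Tendsto F l (𝓝 0) := by
  refine tendsto_order.2 ⟨fun b hb => .of_forall fun a => hb.trans_le (hF a), fun ε hε => ?_⟩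
  filter_upwards [h (ε / (|L| + 1)) (by positivity)] with a ha
  refine ha.trans_lt ?_
  rw [mul_div_assoc', div_lt_iff₀ (by positivity)]
  nlinarith [le_abs_self L]

lemma measurable_apply_of_countable_range {X Y Z : Type*} [MeasurableSpace X] [MeasurableSpace Y]
    [MeasurableSingletonClass Y] [MeasurableSpace Z] {Q : X → Y} (hQ : Measurable Q)
    (hQc : (Set.range Q).Countable) {g : Y → X → Z} (hg : ∀ x, Measurable (g (Q x))) :
    Measurable fun x => g (Q x) x := by
  have := hQc.to_subtype
  have hjoint : Measurable fun q : X × Set.range Q => g q.2 q.1 :=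
    measurable_from_prod_countable_left fun ⟨_, x, hx⟩ => hx ▸ hg x
  exact hjoint.comp (measurable_id.prodMk (hQ.subtype_mk (h := Set.mem_range_self)))

section TotalVariation

variable {α : Type*} [MeasurableSpace α]

lemma abs_measureReal_sub_measureReal_le_one (μ ν : Measure α) [IsProbabilityMeasure μ]
    [IsProbabilityMeasure ν] (D : Set α) : |μ.real D - ν.real D| ≤ 1 :=
  abs_sub_le_of_nonneg_of_le measureReal_nonneg measureReal_le_one measureReal_nonneg
    measureReal_le_one

lemma tvDist_le_two (μ ν : Measure α) [IsProbabilityMeasure μ] [IsProbabilityMeasure ν] :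
    tvDist μ ν ≤ 2 := by
  have hsup : ⨆ D : {D : Set α // MeasurableSet D}, |(μ D.1).toReal - (ν D.1).toReal| ≤ 1 :=
    Real.iSup_le (fun D => abs_measureReal_sub_measureReal_le_one μ ν D.1) zero_le_one
  unfold tvDist
  linarith

lemma two_mul_abs_measureReal_sub_le_tvDist (μ ν : Measure α) [IsProbabilityMeasure μ]
    [IsProbabilityMeasure ν] {D : Set α} (hD : MeasurableSet D) :
    2 * |μ.real D - ν.real D| ≤ tvDist μ ν := by
  have hbdd : BddAbove (Set.range fun D : {D : Set α // MeasurableSet D} =>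
      |(μ D.1).toReal - (ν D.1).toReal|) :=
    ⟨1, Set.forall_mem_range.2 fun D => abs_measureReal_sub_measureReal_le_one μ ν D.1⟩
  exact mul_le_mul_of_nonneg_left (le_ciSup hbdd ⟨D, hD⟩) zero_le_two

lemma measurable_measureReal_superlevel (μ : Measure α) [IsFiniteMeasure μ] (f : α → ℝ) :
    Measurable fun s : ℝ => μ.real {x | s ≤ f x} :=
  Antitone.measurable fun _ _ hst => measureReal_mono fun _ hx => hst.trans hx

lemma IsBoundedMeasurable.measurableSet_superlevel {f : α → ℝ} {M : ℝ}
    (hf : IsBoundedMeasurable f M) (s : ℝ) : MeasurableSet {x | s ≤ f x + M} :=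
  measurableSet_le measurable_const (hf.measurable.add_const M)

lemma IsBoundedMeasurable.integral_eq_integral_superlevel_sub {f : α → ℝ} {M : ℝ}
    (hf : IsBoundedMeasurable f M) (μ : Measure α) [IsProbabilityMeasure μ] :
    ∫ x, f x ∂μ = (∫ s in Set.Ioc 0 (2 * M), μ.real {x | s ≤ f x + M}) - M := by
  have hlayer := ((hf.integrable μ).add (integrable_const M)).integral_eq_integral_Ioc_meas_le
    (M := 2 * M)
    (.of_forall fun x => by simpa [neg_le_iff_add_nonneg] using neg_le_of_abs_le (hf.abs_le x))
    (.of_forall fun x => by simpa [two_mul] using le_of_abs_le (hf.abs_le x))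
  simp only [Pi.add_apply] at hlayer
  rw [← hlayer, integral_add (hf.integrable μ) (integrable_const M)]
  simp

lemma IsBoundedMeasurable.abs_integral_sub_integral_le_mul_tvDist {f : α → ℝ} {M : ℝ}
    (hf : IsBoundedMeasurable f M) (μ ν : Measure α) [IsProbabilityMeasure μ]
    [IsProbabilityMeasure ν] : |∫ x, f x ∂μ - ∫ x, f x ∂ν| ≤ M * tvDist μ ν := by
  have hM : 0 ≤ M := by
    obtain ⟨x⟩ := nonempty_of_isProbabilityMeasure μ
    exact (abs_nonneg _).trans (hf.abs_le x)
  have hint (m : Measure α) [IsProbabilityMeasure m] :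
      IntegrableOn (fun s : ℝ => m.real {x | s ≤ f x + M}) (Set.Ioc 0 (2 * M)) :=
    .of_bound measure_Ioc_lt_top (measurable_measureReal_superlevel m _).aestronglyMeasurable 1
      (.of_forall fun s => by simp [abs_of_nonneg measureReal_nonneg])
  rw [hf.integral_eq_integral_superlevel_sub μ, hf.integral_eq_integral_superlevel_sub ν,
    sub_sub_sub_cancel_right, ← integral_sub (hint μ) (hint ν), ← Real.norm_eq_abs]
  calc _ ≤ tvDist μ ν / 2 * volume.real (Set.Ioc 0 (2 * M)) :=
        norm_setIntegral_le_of_norm_le_const measure_Ioc_lt_top fun s _ => by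
          rw [Real.norm_eq_abs, le_div_iff₀' zero_lt_two]
          exact two_mul_abs_measureReal_sub_le_tvDist μ ν (hf.measurableSet_superlevel s)
    _ = M * tvDist μ ν := by
        rw [Real.volume_real_Ioc_of_le (by positivity)]
        ring

lemma IsBoundedMeasurable.continuous_integral_of_setwise {Y : Type*} [TopologicalSpace Y]
    [FirstCountableTopology Y] {κ : Y → Measure α} (hκ : ∀ y, IsProbabilityMeasure (κ y))
    (hset : ∀ D, MeasurableSet D → Continuous fun y => (κ y).real D) {f : α → ℝ} {M : ℝ}
    (hf : IsBoundedMeasurable f M) : Continuous fun y => ∫ x, f x ∂(κ y) := by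
  simp only [hf.integral_eq_integral_superlevel_sub]
  refine .sub (continuous_of_dominated (bound := fun _ => 1)
    (fun y => (measurable_measureReal_superlevel (κ y) _).aestronglyMeasurable)
    (fun y => .of_forall fun s => by simp [abs_of_nonneg measureReal_nonneg]) (integrable_const _)
    (.of_forall fun s => hset _ (hf.measurableSet_superlevel s))) continuous_const

end TotalVariation

section TVModulus

variable {X B : Type*} [PseudoMetricSpace X] [MeasurableSpace X] [PseudoMetricSpace B]

/-- The modulus `ω_δ(r)` in total variation of the quantized kernel `p^δ = Q_# p`. -/
def tvModulus (p : X → B → Measure X) (Q : X → X) (r : ℝ) : ℝ :=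
  sSup {v : ℝ | ∃ x y : X, ∃ a b : B, dist x y + dist a b ≤ r ∧
    v = tvDist ((p x a).map Q) ((p y b).map Q)}

lemma tvDist_map_le_tvModulus {p : X → B → Measure X} (hp : ∀ x b, IsProbabilityMeasure (p x b))
    {Q : X → X} (hQ : Measurable Q) {x y : X} {a b : B} {r : ℝ}
    (h : dist x y + dist a b ≤ r) :
    tvDist ((p x a).map Q) ((p y b).map Q) ≤ tvModulus p Q r := by
  have (x : X) (b : B) : IsProbabilityMeasure ((p x b).map Q) :=
    Measure.isProbabilityMeasure_map hQ.aemeasurable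
  refine le_csSup ⟨2, ?_⟩ ⟨x, y, a, b, h, rfl⟩
  rintro _ ⟨x, y, a, b, -, rfl⟩
  exact tvDist_le_two _ _

/-- At distance at most `r`, the stage cost and the quantized kernel vary by at most `η`. -/
def IsStageModulus (c : X → B → ℝ) (p : X → B → Measure X) (Q : X → X) (r η : ℝ) : Prop :=
  ∀ ⦃x y : X⦄ ⦃a b : B⦄, dist x y + dist a b ≤ r →
    |c x a - c y b| ≤ η ∧ tvDist ((p x a).map Q) ((p y b).map Q) ≤ η

lemma eventually_isStageModulus {c : X → B → ℝ}
    (hc : UniformContinuous fun q : X × B => c q.1 q.2) {p : X → B → Measure X}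
    (hp : ∀ x b, IsProbabilityMeasure (p x b)) {Q : ℝ → X → X} (hQ : ∀ δ > 0, Measurable (Q δ))
    (hquant : Tendsto (fun δ => tvModulus p (Q δ) (2 * δ)) (𝓝[>] 0) (𝓝 0)) {η : ℝ} (hη : 0 < η) :
    ∀ᶠ δ in 𝓝[>] 0, IsStageModulus c p (Q δ) (2 * δ) η := by
  obtain ⟨δ₀, hδ₀, hmod⟩ := Metric.uniformContinuous_iff.1 hc η hη
  have hsmall : ∀ᶠ δ : ℝ in 𝓝[>] 0, δ < δ₀ / 2 :=
    mem_nhdsWithin_of_mem_nhds (Iio_mem_nhds (half_pos hδ₀))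
  filter_upwards [hsmall, hquant.eventually_le_const hη, self_mem_nhdsWithin]
    with δ hlt_half htv hδ x y a b hd
  have hlt : dist (x, a) (y, b) < δ₀ := by
    have := dist_nonneg (x := x) (y := y)
    have := dist_nonneg (x := a) (y := b)
    exact max_lt (by linarith) (by linarith)
  exact ⟨(hmod hlt).le, (tvDist_map_le_tvModulus hp (hQ δ hδ) hd).trans htv⟩

end TVModulus

section Lookahead

variable {X B : Type*} [MeasurableSpace X]

/-- The one-stage lookahead cost `c(x, b) + ∫ f dp(· | x, b)` of the joint action `b`, for the
continuation value `f`. -/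
def lookaheadCost (c : X → B → ℝ) (p : X → B → Measure X) (f : X → ℝ) (x : X) (b : B) : ℝ :=
  c x b + ∫ y, f y ∂(p x b)

/-- The expectation of the one-stage lookahead cost when the joint action has law `m`. -/
def mixedLookaheadCost [MeasurableSpace B] (c : X → B → ℝ) (p : X → B → Measure X) (m : Measure B)
    (f : X → ℝ) (x : X) : ℝ :=
  ∫ b, lookaheadCost c p f x b ∂m

/-- One-stage data of the original model: a continuous cost bounded by `C` and a setwise continuous
stochastic kernel. -/
structure IsRegularStage [TopologicalSpace X] [TopologicalSpace B] (c : X → B → ℝ)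
    (p : X → B → Measure X) (C : ℝ≥0) : Prop where
  continuous_cost : Continuous fun q : X × B => c q.1 q.2
  abs_cost_le : ∀ x b, |c x b| ≤ C
  isProbabilityMeasure : ∀ x b, IsProbabilityMeasure (p x b)
  continuous_kernel : ∀ D, MeasurableSet D → Continuous fun q : X × B => (p q.1 q.2).real D

namespace IsRegularStage

variable [TopologicalSpace X] [TopologicalSpace B] {c : X → B → ℝ} {p : X → B → Measure X}
  {C : ℝ≥0} {f : X → ℝ} {M : ℝ}

lemma continuous_lookaheadCost [FirstCountableTopology X] [FirstCountableTopology B]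
    (h : IsRegularStage c p C) (hf : IsBoundedMeasurable f M) :
    Continuous fun q : X × B => lookaheadCost c p f q.1 q.2 :=
  h.continuous_cost.add
    (hf.continuous_integral_of_setwise (fun _ => h.isProbabilityMeasure _ _) h.continuous_kernel)

lemma abs_lookaheadCost_le (h : IsRegularStage c p C) (hf : IsBoundedMeasurable f M) (x : X)
    (b : B) : |lookaheadCost c p f x b| ≤ C + M := by
  have := h.isProbabilityMeasure x b
  exact (abs_add_le _ _).trans
    (add_le_add (h.abs_cost_le x b) (abs_integral_le_of_ae_abs_le (.of_forall hf.abs_le)))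

variable [MeasurableSpace B]

lemma abs_mixedLookaheadCost_le (h : IsRegularStage c p C) (hf : IsBoundedMeasurable f M)
    (m : Measure B) [IsProbabilityMeasure m] (x : X) : |mixedLookaheadCost c p m f x| ≤ C + M :=
  abs_integral_le_of_ae_abs_le (.of_forall (h.abs_lookaheadCost_le hf x))

variable [FirstCountableTopology X] [FirstCountableTopology B] [OpensMeasurableSpace B]

lemma isBoundedMeasurable_lookaheadCost (h : IsRegularStage c p C) (hf : IsBoundedMeasurable f M)
    (x : X) : IsBoundedMeasurable (lookaheadCost c p f x) (C + M) where
  measurable := ((h.continuous_lookaheadCost hf).comp (Continuous.prodMk_right x)).measurable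
  abs_le := h.abs_lookaheadCost_le hf x

lemma continuous_mixedLookaheadCost (h : IsRegularStage c p C) (hf : IsBoundedMeasurable f M)
    (m : Measure B) [IsProbabilityMeasure m] : Continuous (mixedLookaheadCost c p m f) :=
  continuous_of_dominated (bound := fun _ => C + M)
    (fun x => (h.isBoundedMeasurable_lookaheadCost hf x).measurable.aestronglyMeasurable)
    (fun x => .of_forall (h.abs_lookaheadCost_le hf x)) (integrable_const _)
    (.of_forall fun b => (h.continuous_lookaheadCost hf).comp (Continuous.prodMk_left b))

lemma isBoundedMeasurable_mixedLookaheadCost [OpensMeasurableSpace X] (h : IsRegularStage c p C)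
    (hf : IsBoundedMeasurable f M) (m : Measure B) [IsProbabilityMeasure m] :
    IsBoundedMeasurable (mixedLookaheadCost c p m f) (C + M) where
  measurable := (h.continuous_mixedLookaheadCost hf m).measurable
  abs_le := h.abs_mixedLookaheadCost_le hf m

end IsRegularStage

end Lookahead

section LookaheadComparison

variable {X B : Type*} [PseudoMetricSpace X] [MeasurableSpace X] [PseudoMetricSpace B]
  {c : X → B → ℝ} {p : X → B → Measure X} {C : ℝ≥0} {Q : X → X} {r η : ℝ}
  {f g : X → ℝ} {M M' K : ℝ}

lemma IsStageModulus.abs_lookaheadCost_sub_le (hmod : IsStageModulus c p Q r η)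
    (hp : ∀ x b, IsProbabilityMeasure (p x b)) (hQ : Measurable Q)
    (hf : IsBoundedMeasurable f M) (hfQ : ∀ x, f x = f (Q x)) (hg : IsBoundedMeasurable g M')
    (hgf : ∀ x, |g x - f x| ≤ K) {x y : X} {a b : B} (hd : dist x y + dist a b ≤ r) :
    |lookaheadCost c p g x a - lookaheadCost c p f y b| ≤ (1 + M) * η + K := by
  obtain ⟨hcost, htv⟩ := hmod hd
  have hM : 0 ≤ M := (abs_nonneg _).trans (hf.abs_le x)
  have (x : X) (b : B) : IsProbabilityMeasure ((p x b).map Q) :=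
    Measure.isProbabilityMeasure_map hQ.aemeasurable
  have hpush (x : X) (b : B) : ∫ w, f w ∂(p x b) = ∫ w, f w ∂((p x b).map Q) := by
    rw [integral_map hQ.aemeasurable hf.measurable.aestronglyMeasurable]
    exact integral_congr_ae (.of_forall hfQ)
  have hvalue : |∫ w, g w ∂(p x a) - ∫ w, f w ∂(p x a)| ≤ K :=
    abs_integral_sub_integral_le_of_ae (hg.integrable _) (hf.integrable _) (.of_forall hgf)
  have hkernel : |∫ w, f w ∂(p x a) - ∫ w, f w ∂(p y b)| ≤ M * η := by
    rw [hpush, hpush]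
    exact (hf.abs_integral_sub_integral_le_mul_tvDist _ _).trans
      (mul_le_mul_of_nonneg_left htv hM)
  unfold lookaheadCost
  rw [abs_le] at *
  constructor <;> linarith [hcost.1, hcost.2, hvalue.1, hvalue.2, hkernel.1, hkernel.2]

variable [MeasurableSpace B] [OpensMeasurableSpace B]

/- Writing the two laws as images of a common `m` couples them, so that the joint actions need
only be close pointwise. -/
lemma IsStageModulus.abs_mixedLookaheadCost_map_sub_le {Ω : Type*} [MeasurableSpace Ω]
    (hmod : IsStageModulus c p Q r η) (hreg : IsRegularStage c p C) (hQ : Measurable Q)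
    (hf : IsBoundedMeasurable f M) (hfQ : ∀ x, f x = f (Q x)) (hg : IsBoundedMeasurable g M')
    (hgf : ∀ x, |g x - f x| ≤ K) {φ ψ : Ω → B} (hφ : Measurable φ) (hψ : Measurable ψ)
    (m : Measure Ω) [IsProbabilityMeasure m] {x y : X}
    (hd : ∀ ω, dist x y + dist (φ ω) (ψ ω) ≤ r) :
    |mixedLookaheadCost c p (m.map φ) g x - mixedLookaheadCost c p (m.map ψ) f y|
      ≤ (1 + M) * η + K := by
  have hG := hreg.isBoundedMeasurable_lookaheadCost hg x
  have hF := hreg.isBoundedMeasurable_lookaheadCost hf y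
  unfold mixedLookaheadCost
  rw [integral_map hφ.aemeasurable hG.measurable.aestronglyMeasurable,
    integral_map hψ.aemeasurable hF.measurable.aestronglyMeasurable]
  exact abs_integral_sub_integral_le_of_ae ((hG.integrable (m.map φ)).comp_measurable hφ)
    ((hF.integrable (m.map ψ)).comp_measurable hψ)
    (.of_forall fun ω =>
      hmod.abs_lookaheadCost_sub_le hreg.isProbabilityMeasure hQ hf hfQ hg hgf (hd ω))

lemma IsStageModulus.abs_mixedLookaheadCost_sub_le (hmod : IsStageModulus c p Q r η)
    (hreg : IsRegularStage c p C) (hQ : Measurable Q) (hf : IsBoundedMeasurable f M)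
    (hfQ : ∀ x, f x = f (Q x)) (hg : IsBoundedMeasurable g M') (hgf : ∀ x, |g x - f x| ≤ K)
    (m : Measure B) [IsProbabilityMeasure m] {x y : X} (hd : dist x y ≤ r) :
    |mixedLookaheadCost c p m g x - mixedLookaheadCost c p m f y| ≤ (1 + M) * η + K := by
  simpa using hmod.abs_mixedLookaheadCost_map_sub_le hreg hQ hf hfQ hg hgf measurable_id
    measurable_id m (fun ω => by simpa using hd)

end LookaheadComparison

section Deviation

variable {ι : Type*} [DecidableEq ι] {A : ι → Type*} [∀ j, MeasurableSpace (A j)]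

lemma measurable_update_apply (i : ι) (a : A i) :
    Measurable fun b : ∀ j, A j => Function.update b i a :=
  measurable_update'.comp measurable_prodMk_right

variable [Fintype ι]

/-- The law of the joint action when player `i` deviates from the mixed profile `μ` to the pure
action `a`. -/
def deviation (μ : ∀ j, Measure (A j)) (i : ι) (a : A i) : Measure (∀ j, A j) :=
  Measure.pi (Function.update μ i (Measure.dirac a))

lemma deviation_eq_map (μ : ∀ j, Measure (A j)) [∀ j, IsProbabilityMeasure (μ j)] (i : ι)
    (a : A i) :
    deviation μ i a = (Measure.pi μ).map fun b => Function.update b i a := by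
  let φ : ∀ j, A j → A j := Function.update (fun _ => id) i fun _ => a
  have hφ (j : ι) : Measurable (φ j) := by
    rcases eq_or_ne j i with rfl | hj
    · simp [φ]
    · simpa [φ, hj] using measurable_id
  have hmarginal (j : ι) : Function.update μ i (Measure.dirac a) j = (μ j).map (φ j) := by
    rcases eq_or_ne j i with rfl | hj
    · simp [φ]
    · simp [φ, hj]
  have (j : ι) : IsProbabilityMeasure ((μ j).map (φ j)) :=
    Measure.isProbabilityMeasure_map (hφ j).aemeasurable
  have hcoord (b : ∀ j, A j) : Function.update b i a = fun j => φ j (b j) := by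
    funext j
    rcases eq_or_ne j i with rfl | hj
    · simp [φ]
    · simp [φ, hj]
  simp only [deviation, funext hmarginal, hcoord]
  exact (Measure.pi_map_pi fun j => (hφ j).aemeasurable).symm

instance isProbabilityMeasure_deviation (μ : ∀ j, Measure (A j)) [∀ j, IsProbabilityMeasure (μ j)]
    (i : ι) (a : A i) : IsProbabilityMeasure (deviation μ i a) := by
  rw [deviation_eq_map]
  exact Measure.isProbabilityMeasure_map (measurable_update_apply i a).aemeasurable

end Deviation

lemma dist_update_update_le {ι : Type*} [Fintype ι] [DecidableEq ι] {A : ι → Type*}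
    [∀ j, PseudoMetricSpace (A j)] (b : ∀ j, A j) (i : ι) (a a' : A i) :
    dist (Function.update b i a) (Function.update b i a') ≤ dist a a' := by
  refine (dist_pi_le_iff dist_nonneg).2 fun j => ?_
  rcases eq_or_ne j i with rfl | hj
  · simp
  · simp [hj]

/-- A measurable quantizer with countably many cells, moving points by at most `δ`, together with a
weighting measure `ν` that charges every cell. -/
structure IsQuantizer {X : Type*} [PseudoMetricSpace X] [MeasurableSpace X] (Q : X → X)
    (ν : Measure X) (δ : ℝ) : Prop where
  measurable : Measurable Q
  countable_range : (Set.range Q).Countable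
  dist_le : ∀ x, dist x (Q x) ≤ δ
  cell_ne_zero : ∀ x, ν (Q ⁻¹' {Q x}) ≠ 0

namespace IsQuantizer

variable {X : Type*} [PseudoMetricSpace X] [MeasurableSpace X] {Q : X → X} {ν : Measure X}
  {δ : ℝ}

lemma isProbabilityMeasure_cellMeasure [IsFiniteMeasure ν] (hQ : IsQuantizer Q ν δ) (x : X) :
    IsProbabilityMeasure (cellMeasure ν Q (Q x)) :=
  ProbabilityTheory.cond_isProbabilityMeasure (hQ.cell_ne_zero x)

lemma ae_cellMeasure_dist_le [MeasurableSingletonClass X] (hQ : IsQuantizer Q ν δ) (x : X) :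
    ∀ᵐ y ∂(cellMeasure ν Q (Q x)), dist x y ≤ 2 * δ := by
  have hcell : ∀ᵐ y ∂(cellMeasure ν Q (Q x)), Q y = Q x :=
    ProbabilityTheory.ae_cond_mem (hQ.measurable (measurableSet_singleton (Q x)))
  filter_upwards [hcell] with y hy
  calc dist x y ≤ dist x (Q x) + dist y (Q y) := hy ▸ dist_triangle_right x y (Q y)
    _ ≤ 2 * δ := by linarith [hQ.dist_le x, hQ.dist_le y]

end IsQuantizer

section CellComparison

variable {X B : Type*} [PseudoMetricSpace X] [MeasurableSpace X] [OpensMeasurableSpace X]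
  [MeasurableSingletonClass X] [PseudoMetricSpace B] [MeasurableSpace B] [OpensMeasurableSpace B]
  {c : X → B → ℝ} {p : X → B → Measure X} {C : ℝ≥0} {Q : X → X} {ν : Measure X}
  [IsFiniteMeasure ν] {δ η : ℝ} {f g : X → ℝ} {M M' K : ℝ}

lemma IsStageModulus.abs_mixedLookaheadCost_sub_integral_cellMeasure_le
    (hmod : IsStageModulus c p Q (2 * δ) η) (hreg : IsRegularStage c p C)
    (hQ : IsQuantizer Q ν δ) (hf : IsBoundedMeasurable f M) (hfQ : ∀ x, f x = f (Q x))
    (hg : IsBoundedMeasurable g M') (hgf : ∀ x, |g x - f x| ≤ K) (m : Measure B)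
    [IsProbabilityMeasure m] (x : X) :
    |mixedLookaheadCost c p m g x - ∫ y, mixedLookaheadCost c p m f y ∂(cellMeasure ν Q (Q x))|
      ≤ (1 + M) * η + K := by
  have := hQ.isProbabilityMeasure_cellMeasure x
  refine abs_sub_integral_le_of_ae
    ((hreg.isBoundedMeasurable_mixedLookaheadCost hf m).integrable _) ?_
  filter_upwards [hQ.ae_cellMeasure_dist_le x] with y hy
  exact hmod.abs_mixedLookaheadCost_sub_le hreg hQ.measurable hf hfQ hg hgf m hy

end CellComparison

section Game

variable {X : Type*} [MeasurableSpace X] {ι : Type*} {A : ι → Type*} [∀ j, MeasurableSpace (A j)]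

/-- Markov policies up to time `T` which depend on the state only through its quantization `Q x`:
the extensions to `X` of the policies of the finite model. -/
structure IsCellwisePolicy (T : ℕ) (Q : X → X) (π : ∀ j, ℕ → X → Measure (A j)) : Prop where
  isProbabilityMeasure : ∀ j, ∀ t < T, ∀ x, IsProbabilityMeasure (π j t x)
  apply_quantizer : ∀ j, ∀ t < T, ∀ x, π j t x = π j t (Q x)

variable [Fintype ι]

/-- `J t` is the cost-to-go `J^i_t` in the original model under the joint policy `π`. -/
structure IsCostToGo (c : X → (∀ j, A j) → ℝ) (p : X → (∀ j, A j) → Measure X) (T : ℕ)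
    (π : ∀ j, ℕ → X → Measure (A j)) (J : ℕ → X → ℝ) : Prop where
  terminal : ∀ x, J T x = 0
  recursion : ∀ t < T, ∀ x,
    J t x = mixedLookaheadCost c p (Measure.pi fun j => π j t x) (J (t + 1)) x

variable [DecidableEq ι]

/-- `J t` is the best-response value `J*_t` of player `i` in the original model against the
policies `π j`, `j ≠ i`. -/
structure IsBestResponseValue (c : X → (∀ j, A j) → ℝ) (p : X → (∀ j, A j) → Measure X) (T : ℕ)
    (i : ι) (π : ∀ j, ℕ → X → Measure (A j)) (J : ℕ → X → ℝ) : Prop where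
  terminal : ∀ x, J T x = 0
  recursion : ∀ t < T, ∀ x,
    J t x = ⨅ a : A i, mixedLookaheadCost c p (deviation (fun j => π j t x) i a) (J (t + 1)) x

/-- `J t` is the extension `Ĵ*_{δ,t}` to `X` of the best-response value of player `i` in the
quantized model with action grid `S`, and the minimum is attained by the policy `π i`. The states
of the quantized model are the values `Q x`. -/
structure IsQuantizedEquilibriumValue (c : X → (∀ j, A j) → ℝ) (p : X → (∀ j, A j) → Measure X)
    (T : ℕ) (i : ι) (Q : X → X) (ν : Measure X) (S : Set (A i))
    (π : ∀ j, ℕ → X → Measure (A j)) (J : ℕ → X → ℝ) : Prop where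
  apply_quantizer : ∀ t ≤ T, ∀ x, J t x = J t (Q x)
  terminal : ∀ x, J T x = 0
  best_response : ∀ t < T, ∀ x, J t (Q x) = sInf {v : ℝ | ∃ a ∈ S, v =
    ∫ y, mixedLookaheadCost c p (deviation (fun j => π j t (Q x)) i a) (J (t + 1)) y
      ∂(cellMeasure ν Q (Q x))}
  attained : ∀ t < T, ∀ x, J t (Q x) =
    ∫ y, mixedLookaheadCost c p (Measure.pi fun j => π j t (Q x)) (J (t + 1)) y
      ∂(cellMeasure ν Q (Q x))

end Game

section DeviationComparison

variable {X : Type*} [PseudoMetricSpace X] [MeasurableSpace X] [OpensMeasurableSpace X]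
  {ι : Type*} [Fintype ι] [DecidableEq ι] {A : ι → Type*}
  [∀ j, PseudoMetricSpace (A j)] [∀ j, SecondCountableTopology (A j)]
  [∀ j, MeasurableSpace (A j)] [∀ j, OpensMeasurableSpace (A j)]
  {c : X → (∀ j, A j) → ℝ} {p : X → (∀ j, A j) → Measure X} {C : ℝ≥0} {Q : X → X}
  {ν : Measure X} [IsFiniteMeasure ν] {δ η : ℝ} {f g : X → ℝ} {M M' K : ℝ}

lemma IsRegularStage.isBoundedMeasurable_iInf_deviation (hreg : IsRegularStage c p C)
    (hg : IsBoundedMeasurable g M) (μ : ∀ j, Measure (A j)) [∀ j, IsProbabilityMeasure (μ j)]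
    (i : ι) :
    IsBoundedMeasurable (fun x => ⨅ a, mixedLookaheadCost c p (deviation μ i a) g x)
      (C + M) where
  measurable := by
    refine (upperSemicontinuous_ciInf (fun x => ⟨-(C + M), ?_⟩) fun a =>
      (hreg.continuous_mixedLookaheadCost hg _).upperSemicontinuous).measurable
    rintro _ ⟨a, rfl⟩
    exact neg_le_of_abs_le (hreg.abs_mixedLookaheadCost_le hg _ x)
  abs_le x := by
    have hne := nonempty_of_isProbabilityMeasure (μ i)
    have hbound (a : A i) := abs_le.1 (hreg.abs_mixedLookaheadCost_le hg (deviation μ i a) x)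
    have hbdd : BddBelow (Set.range fun a => mixedLookaheadCost c p (deviation μ i a) g x) :=
      ⟨-(C + M), Set.forall_mem_range.2 fun a => (hbound a).1⟩
    exact abs_le.2 ⟨le_ciInf fun a => (hbound a).1, (ciInf_le hbdd hne.some).trans (hbound _).2⟩

variable [MeasurableSingletonClass X]

lemma IsStageModulus.abs_deviation_sub_integral_cellMeasure_le
    (hmod : IsStageModulus c p Q (2 * δ) η) (hreg : IsRegularStage c p C)
    (hQ : IsQuantizer Q ν δ) (hf : IsBoundedMeasurable f M) (hfQ : ∀ x, f x = f (Q x))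
    (hg : IsBoundedMeasurable g M') (hgf : ∀ x, |g x - f x| ≤ K) (μ : ∀ j, Measure (A j))
    [∀ j, IsProbabilityMeasure (μ j)] {i : ι} (x : X) {a a' : A i} (haa' : dist a a' ≤ δ) :
    |mixedLookaheadCost c p (deviation μ i a) g x -
        ∫ y, mixedLookaheadCost c p (deviation μ i a') f y ∂(cellMeasure ν Q (Q x))|
      ≤ 2 * ((1 + M) * η) + K := by
  have hδ : 0 ≤ δ := dist_nonneg.trans haa'
  have haction : |mixedLookaheadCost c p (deviation μ i a) g x -
      mixedLookaheadCost c p (deviation μ i a') f x| ≤ (1 + M) * η + K := by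
    rw [deviation_eq_map, deviation_eq_map]
    refine hmod.abs_mixedLookaheadCost_map_sub_le hreg hQ.measurable hf hfQ hg hgf
      (measurable_update_apply i a) (measurable_update_apply i a') _ fun b => ?_
    rw [dist_self]
    linarith [dist_update_update_le b i a a']
  have hstate := hmod.abs_mixedLookaheadCost_sub_integral_cellMeasure_le (K := 0) hreg hQ hf hfQ hf
    (by simp) (deviation μ i a') x
  linarith [abs_sub_le (mixedLookaheadCost c p (deviation μ i a) g x)
    (mixedLookaheadCost c p (deviation μ i a') f x)
    (∫ y, mixedLookaheadCost c p (deviation μ i a') f y ∂(cellMeasure ν Q (Q x)))]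

lemma IsStageModulus.abs_iInf_deviation_sub_sInf_le
    (hmod : IsStageModulus c p Q (2 * δ) η) (hreg : IsRegularStage c p C)
    (hQ : IsQuantizer Q ν δ) (hf : IsBoundedMeasurable f M) (hfQ : ∀ x, f x = f (Q x))
    (hg : IsBoundedMeasurable g M') (hgf : ∀ x, |g x - f x| ≤ K) (μ : ∀ j, Measure (A j))
    [∀ j, IsProbabilityMeasure (μ j)] {i : ι} {S : Set (A i)}
    (hS : ∀ a, ∃ b ∈ S, dist a b ≤ δ) (x : X) :
    |(⨅ a : A i, mixedLookaheadCost c p (deviation μ i a) g x) -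
        sInf {v : ℝ | ∃ a ∈ S, v =
          ∫ y, mixedLookaheadCost c p (deviation μ i a) f y ∂(cellMeasure ν Q (Q x))}|
      ≤ 2 * ((1 + M) * η) + K := by
  have := nonempty_of_isProbabilityMeasure (μ i)
  have hδ : 0 ≤ δ := dist_nonneg.trans (hQ.dist_le x)
  have hclose {a a' : A i} (haa' : dist a a' ≤ δ) :=
    hmod.abs_deviation_sub_integral_cellMeasure_le hreg hQ hf hfQ hg hgf μ x haa'
  have hbdd : BddBelow (Set.range fun a : A i => mixedLookaheadCost c p (deviation μ i a) g x) :=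
    ⟨-(C + M'), Set.forall_mem_range.2 fun a =>
      neg_le_of_abs_le (hreg.abs_mixedLookaheadCost_le hg (deviation μ i a) x)⟩
  refine abs_csInf_sub_csInf_le hbdd (Set.range_nonempty _) ?_ ?_
  · rintro _ ⟨a, rfl⟩
    obtain ⟨b, hb, hab⟩ := hS a
    exact ⟨_, ⟨b, hb, rfl⟩, hclose hab⟩
  · rintro _ ⟨b, -, rfl⟩
    exact ⟨_, ⟨b, rfl⟩, hclose (by simpa using hδ)⟩

end DeviationComparison

section BackwardInduction

variable {X : Type*} [PseudoMetricSpace X] [MeasurableSpace X]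
  [MeasurableSingletonClass X] {ι : Type*} [Fintype ι] {A : ι → Type*}
  [∀ j, PseudoMetricSpace (A j)] [∀ j, MeasurableSpace (A j)]
  {c : X → (∀ j, A j) → ℝ} {p : X → (∀ j, A j) → Measure X} {C : ℝ≥0} {T t : ℕ} {i : ι}
  {Q : X → X} {ν : Measure X} {δ η : ℝ} {S : Set (A i)}
  {π : ∀ j, ℕ → X → Measure (A j)} {Jd Js Ji : ℕ → X → ℝ}

lemma IsQuantizedEquilibriumValue.isBoundedMeasurable [DecidableEq ι] [IsFiniteMeasure ν]
    (hJ : IsQuantizedEquilibriumValue c p T i Q ν S π Jd) (hreg : IsRegularStage c p C)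
    (hQ : IsQuantizer Q ν δ) (hπ : IsCellwisePolicy T Q π) :
    ∀ t ≤ T, IsBoundedMeasurable (Jd t) (T * C) := by
  refine isBoundedMeasurable_of_backward_step hJ.terminal fun t ht M hM => ⟨?_, fun x => ?_⟩
  · rw [funext (hJ.apply_quantizer t ht.le)]
    exact measurable_apply_of_countable_range hQ.measurable hQ.countable_range
      (g := fun z _ => Jd t z) fun _ => measurable_const
  · have (j : ι) := hπ.isProbabilityMeasure j t ht (Q x)
    have := hQ.isProbabilityMeasure_cellMeasure x
    rw [hJ.apply_quantizer t ht.le, hJ.attained t ht]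
    exact abs_integral_le_of_ae_abs_le (.of_forall
      (hreg.abs_mixedLookaheadCost_le hM (Measure.pi fun j => π j t (Q x))))

variable [OpensMeasurableSpace X] [∀ j, SecondCountableTopology (A j)]
  [∀ j, OpensMeasurableSpace (A j)]

lemma IsCostToGo.isBoundedMeasurable (hJ : IsCostToGo c p T π Ji) (hreg : IsRegularStage c p C)
    (hQ : IsQuantizer Q ν δ) (hπ : IsCellwisePolicy T Q π) :
    ∀ t ≤ T, IsBoundedMeasurable (Ji t) (T * C) := by
  refine isBoundedMeasurable_of_backward_step hJ.terminal fun t ht M hM => ?_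
  have (x : X) (j : ι) := hπ.isProbabilityMeasure j t ht x
  have hrec : Ji t = fun x =>
      mixedLookaheadCost c p (Measure.pi fun j => π j t (Q x)) (Ji (t + 1)) x := by
    funext x
    simp only [hJ.recursion t ht x, ← hπ.apply_quantizer _ t ht x]
  have hcell (x : X) :=
    hreg.isBoundedMeasurable_mixedLookaheadCost hM (Measure.pi fun j => π j t (Q x))
  rw [hrec]
  exact ⟨measurable_apply_of_countable_range hQ.measurable hQ.countable_range
    (g := fun z => mixedLookaheadCost c p (Measure.pi fun j => π j t z) (Ji (t + 1)))
    fun x => (hcell x).measurable, fun x => (hcell x).abs_le x⟩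

variable [DecidableEq ι]

lemma IsBestResponseValue.isBoundedMeasurable (hJ : IsBestResponseValue c p T i π Js)
    (hreg : IsRegularStage c p C) (hQ : IsQuantizer Q ν δ) (hπ : IsCellwisePolicy T Q π) :
    ∀ t ≤ T, IsBoundedMeasurable (Js t) (T * C) := by
  refine isBoundedMeasurable_of_backward_step hJ.terminal fun t ht M hM => ?_
  have (x : X) (j : ι) := hπ.isProbabilityMeasure j t ht x
  have hrec : Js t = fun x => ⨅ a : A i,
      mixedLookaheadCost c p (deviation (fun j => π j t (Q x)) i a) (Js (t + 1)) x := by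
    funext x
    simp only [hJ.recursion t ht x, ← hπ.apply_quantizer _ t ht x]
  have hcell (x : X) := hreg.isBoundedMeasurable_iInf_deviation hM (fun j => π j t (Q x)) i
  rw [hrec]
  exact ⟨measurable_apply_of_countable_range hQ.measurable hQ.countable_range
    (g := fun z x => ⨅ a : A i,
      mixedLookaheadCost c p (deviation (fun j => π j t z) i a) (Js (t + 1)) x)
    fun x => (hcell x).measurable, fun x => (hcell x).abs_le x⟩

variable [IsFiniteMeasure ν]

lemma IsCostToGo.abs_sub_quantizedEquilibriumValue_le (hJi : IsCostToGo c p T π Ji)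
    (hJd : IsQuantizedEquilibriumValue c p T i Q ν S π Jd) (hreg : IsRegularStage c p C)
    (hmod : IsStageModulus c p Q (2 * δ) η) (hQ : IsQuantizer Q ν δ)
    (hπ : IsCellwisePolicy T Q π) :
    ∀ t ≤ T, ∀ x, |Ji t x - Jd t x| ≤ (T - t) * ((1 + T * C) * η) := by
  refine backward_induction_linear (P := fun t K => ∀ x, |Ji t x - Jd t x| ≤ K)
    (fun x => by simp [hJi.terminal, hJd.terminal]) fun t ht K hK x => ?_
  have (j : ι) := hπ.isProbabilityMeasure j t ht (Q x)
  rw [hJi.recursion t ht, funext fun j => hπ.apply_quantizer j t ht x,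
    hJd.apply_quantizer t ht.le, hJd.attained t ht]
  exact hmod.abs_mixedLookaheadCost_sub_integral_cellMeasure_le hreg hQ
    (hJd.isBoundedMeasurable hreg hQ hπ _ ht) (hJd.apply_quantizer _ ht)
    (hJi.isBoundedMeasurable hreg hQ hπ _ ht) hK (Measure.pi fun j => π j t (Q x)) x

lemma IsBestResponseValue.abs_sub_quantizedEquilibriumValue_le
    (hJs : IsBestResponseValue c p T i π Js)
    (hJd : IsQuantizedEquilibriumValue c p T i Q ν S π Jd) (hreg : IsRegularStage c p C)
    (hmod : IsStageModulus c p Q (2 * δ) η) (hQ : IsQuantizer Q ν δ)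
    (hπ : IsCellwisePolicy T Q π) (hS : ∀ a, ∃ b ∈ S, dist a b ≤ δ) :
    ∀ t ≤ T, ∀ x, |Js t x - Jd t x| ≤ (T - t) * (2 * ((1 + T * C) * η)) := by
  refine backward_induction_linear (P := fun t K => ∀ x, |Js t x - Jd t x| ≤ K)
    (fun x => by simp [hJs.terminal, hJd.terminal]) fun t ht K hK x => ?_
  have (j : ι) := hπ.isProbabilityMeasure j t ht (Q x)
  rw [hJs.recursion t ht, funext fun j => hπ.apply_quantizer j t ht x,
    hJd.apply_quantizer t ht.le, hJd.best_response t ht]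
  exact hmod.abs_iInf_deviation_sub_sInf_le hreg hQ
    (hJd.isBoundedMeasurable hreg hQ hπ _ ht) (hJd.apply_quantizer _ ht)
    (hJs.isBoundedMeasurable hreg hQ hπ _ ht) hK (fun j => π j t (Q x)) hS x

lemma abs_costToGo_sub_bestResponseValue_le (hJi : IsCostToGo c p T π Ji)
    (hJs : IsBestResponseValue c p T i π Js)
    (hJd : IsQuantizedEquilibriumValue c p T i Q ν S π Jd) (hreg : IsRegularStage c p C)
    (hmod : IsStageModulus c p Q (2 * δ) η) (hQ : IsQuantizer Q ν δ)
    (hπ : IsCellwisePolicy T Q π) (hS : ∀ a, ∃ b ∈ S, dist a b ≤ δ) (ht : t ≤ T) (x : X) :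
    |Ji t x - Js t x| ≤ 3 * (T - t) * (1 + T * C) * η :=
  calc |Ji t x - Js t x| ≤ |Ji t x - Jd t x| + |Js t x - Jd t x| := by
        rw [abs_sub_comm (Js t x)]
        exact abs_sub_le _ _ _
    _ ≤ (T - t) * ((1 + T * C) * η) + (T - t) * (2 * ((1 + T * C) * η)) :=
        add_le_add (hJi.abs_sub_quantizedEquilibriumValue_le hJd hreg hmod hQ hπ t ht x)
          (hJs.abs_sub_quantizedEquilibriumValue_le hJd hreg hmod hQ hπ hS t ht x)
    _ = 3 * (T - t) * (1 + T * C) * η := by ring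

theorem finite_horizon_equilibrium_cost_approximation_general
    (hc_unif : UniformContinuous fun q : X × (∀ j, A j) => c q.1 q.2)
    (hc_bdd : ∃ C, ∀ x b, |c x b| ≤ C) (hp : ∀ x b, IsProbabilityMeasure (p x b))
    (hp_setwise : ∀ D, MeasurableSet D →
      Continuous fun q : X × (∀ j, A j) => (p q.1 q.2).real D)
    {Q : ℝ → X → X} {ν : ℝ → Measure X} (hν : ∀ δ > 0, IsFiniteMeasure (ν δ))
    (hQ : ∀ δ > 0, IsQuantizer (Q δ) (ν δ) δ)
    {S : ℝ → Set (A i)} (hS : ∀ δ > 0, ∀ a, ∃ b ∈ S δ, dist a b ≤ δ)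
    (hquant : Tendsto (fun δ => tvModulus p (Q δ) (2 * δ)) (𝓝[>] 0) (𝓝 0))
    {π : ℝ → ∀ j, ℕ → X → Measure (A j)} (hπ : ∀ δ > 0, IsCellwisePolicy T (Q δ) (π δ))
    {Jd Js Ji : ℝ → ℕ → X → ℝ}
    (hJd : ∀ δ > 0, IsQuantizedEquilibriumValue c p T i (Q δ) (ν δ) (S δ) (π δ) (Jd δ))
    (hJs : ∀ δ > 0, IsBestResponseValue c p T i (π δ) (Js δ))
    (hJi : ∀ δ > 0, IsCostToGo c p T (π δ) (Ji δ)) (ht : t ≤ T) :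
    Tendsto (fun δ => ⨆ x : X, |Ji δ t x - Js δ t x|) (𝓝[>] 0) (𝓝 0) := by
  obtain ⟨C, hC⟩ := hc_bdd
  have hreg : IsRegularStage c p C.toNNReal :=
    ⟨hc_unif.continuous, fun x b => (hC x b).trans C.le_coe_toNNReal, hp, hp_setwise⟩
  have hTt : (0 : ℝ) ≤ T - t := by simpa using ht
  refine tendsto_zero_of_forall_eventually_le_mul (3 * (T - t) * (1 + T * C.toNNReal))
    (fun δ => Real.iSup_nonneg fun x => abs_nonneg _) fun η hη => ?_
  filter_upwards [eventually_isStageModulus hc_unif hp (fun δ hδ => (hQ δ hδ).measurable) hquant hη,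
    self_mem_nhdsWithin] with δ hmod hδ
  have := hν δ hδ
  exact Real.iSup_le (abs_costToGo_sub_bestResponseValue_le (hJi δ hδ) (hJs δ hδ) (hJd δ hδ) hreg
    hmod (hQ δ hδ) (hπ δ hδ) (hS δ hδ) ht) (by positivity)

end BackwardInduction

/-- Finite-horizon approximation of nonzero-sum Markov games (Theorem 4.2 of the paper):
the cost-to-go of each player under the extended finite-model Markov perfect equilibrium
converges uniformly to the original-model best-response value against the extended
policies of the other players. -/
theorem finite_horizon_equilibrium_cost_approximation
    -- compact metric state space
    (X : Type*) [MetricSpace X] [CompactSpace X] [Nonempty X]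
    [MeasurableSpace X] [BorelSpace X]
    -- compact metric action spaces of the N players
    (N : ℕ) (A : Fin N → Type*) [∀ i, MetricSpace (A i)] [∀ i, CompactSpace (A i)]
    [∀ i, Nonempty (A i)] [∀ i, MeasurableSpace (A i)] [∀ i, BorelSpace (A i)]
    -- bounded continuous one-stage cost functions
    (c : Fin N → X → (∀ i, A i) → ℝ)
    (hc : ∀ i, Continuous fun q : X × (∀ i, A i) => c i q.1 q.2)
    -- setwise continuous Borel stochastic kernel
    (p : X → (∀ i, A i) → Measure X)
    (hp_prob : ∀ x a, IsProbabilityMeasure (p x a))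
    (hp_meas : ∀ D : Set X, MeasurableSet D →
      Measurable fun q : X × (∀ i, A i) => p q.1 q.2 D)
    (hp_setwise : ∀ D : Set X, MeasurableSet D →
      Continuous fun q : X × (∀ i, A i) => (p q.1 q.2 D).toReal)
    -- finite horizon
    (T : ℕ)
    -- quantization data: finite δ-nets, nearest-point quantizer, weighting measures
    (Xd : ℝ → Finset X) (Q : ℝ → X → X) (Ad : ℝ → ∀ i, Finset (A i)) (ν : ℝ → Measure X)
    (hXd_net : ∀ δ > (0:ℝ), ∀ x : X, ∃ z ∈ Xd δ, dist x z ≤ δ)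
    (hQ_mem : ∀ δ > (0:ℝ), ∀ x, Q δ x ∈ Xd δ)
    (hQ_near : ∀ δ > (0:ℝ), ∀ x, ∀ z ∈ Xd δ, dist x (Q δ x) ≤ dist x z)
    (hQ_meas : ∀ δ > (0:ℝ), Measurable (Q δ))
    (hAd_net : ∀ δ > (0:ℝ), ∀ i, ∀ a : A i, ∃ b ∈ Ad δ i, dist a b ≤ δ)
    (hν_prob : ∀ δ > (0:ℝ), IsProbabilityMeasure (ν δ))
    (hν_pos : ∀ δ > (0:ℝ), ∀ z ∈ Xd δ, 0 < ν δ (Q δ ⁻¹' {z}))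
    -- the quantization condition `lim_{δ→0} ω_δ(2δ) = 0`
    (hquant : Tendsto
      (fun δ : ℝ => sSup {v : ℝ | ∃ x y : X, ∃ a b : ∀ i, A i,
        dist x y + dist a b ≤ 2 * δ ∧
        v = tvDist ((p x a).map (Q δ)) ((p y b).map (Q δ))})
      (𝓝[>] 0) (𝓝 0))
    -- (already extended) Markov policies of the finite δ-model: probability measures
    -- supported on the finite action nets, piecewise constant on quantization cells
    (π : ℝ → (i : Fin N) → ℕ → X → Measure (A i))
    (hπ_prob : ∀ δ > (0:ℝ), ∀ i t, t < T → ∀ x, IsProbabilityMeasure (π δ i t x))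
    (hπ_supp : ∀ δ > (0:ℝ), ∀ i t, t < T → ∀ x, π δ i t x (Ad δ i) = 1)
    (hπ_const : ∀ δ > (0:ℝ), ∀ i t, t < T → ∀ x, π δ i t x = π δ i t (Q δ x))
    -- the extended finite-model best-response values Ĵ*_{δ,t}(π^{*,-i}_δ;·)
    (Jd : ℝ → Fin N → ℕ → X → ℝ)
    (hJd_const : ∀ δ > (0:ℝ), ∀ i t, t ≤ T → ∀ x, Jd δ i t x = Jd δ i t (Q δ x))
    (hJd_T : ∀ δ > (0:ℝ), ∀ i x, Jd δ i T x = 0)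
    -- backward recursion of the finite δ-model, per state of the net
    (hJd_rec : ∀ δ > (0:ℝ), ∀ i t, t < T → ∀ z ∈ Xd δ,
      Jd δ i t z = sInf {v : ℝ | ∃ a ∈ Ad δ i, v =
        ∫ x, (∫ b, (c i x b + ∫ y, Jd δ i (t+1) y ∂(p x b))
            ∂(Measure.pi (Function.update (fun j => π δ j t z) i (Measure.dirac a))))
          ∂(cellMeasure (ν δ) (Q δ) z)})
    -- the minimum is attained by the equilibrium mixed action π^{*,i}_{δ,t}(z)
    (hJd_attain : ∀ δ > (0:ℝ), ∀ i t, t < T → ∀ z ∈ Xd δ,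
      Jd δ i t z =
        ∫ x, (∫ b, (c i x b + ∫ y, Jd δ i (t+1) y ∂(p x b))
            ∂(Measure.pi fun j => π δ j t z))
          ∂(cellMeasure (ν δ) (Q δ) z))
    -- the original-model best-response values J*_t(π^{*,-i}_δ;·) against the extended policies
    (Js : ℝ → Fin N → ℕ → X → ℝ)
    (hJs_T : ∀ δ > (0:ℝ), ∀ i x, Js δ i T x = 0)
    (hJs_rec : ∀ δ > (0:ℝ), ∀ i t, t < T → ∀ x : X,
      Js δ i t x = ⨅ a : A i,
        ∫ b, (c i x b + ∫ y, Js δ i (t+1) y ∂(p x b))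
          ∂(Measure.pi (Function.update (fun j => π δ j t x) i (Measure.dirac a))))
    -- the cost-to-go J^i_t(π*_δ;·) of player i in the original model under the
    -- extended joint equilibrium policy
    (Ji : ℝ → Fin N → ℕ → X → ℝ)
    (hJi_T : ∀ δ > (0:ℝ), ∀ i x, Ji δ i T x = 0)
    (hJi_rec : ∀ δ > (0:ℝ), ∀ i t, t < T → ∀ x : X,
      Ji δ i t x =
        ∫ b, (c i x b + ∫ y, Ji δ i (t+1) y ∂(p x b))
          ∂(Measure.pi fun j => π δ j t x)) :
    -- conclusion: uniform convergence as δ → 0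
    ∀ i : Fin N, ∀ t ≤ T,
      Tendsto (fun δ : ℝ => ⨆ x : X, |Ji δ i t x - Js δ i t x|) (𝓝[>] 0) (𝓝 0) := by
  intro i t ht
  obtain ⟨C, hC⟩ := isCompact_univ.exists_bound_of_continuousOn (hc i).continuousOn
  have hnear (δ : ℝ) (hδ : δ > 0) (x : X) : dist x (Q δ x) ≤ δ := by
    obtain ⟨z, hz, hxz⟩ := hXd_net δ hδ x
    exact (hQ_near δ hδ x z hz).trans hxz
  have hcountable (δ : ℝ) (hδ : δ > 0) : (Set.range (Q δ)).Countable :=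
    (Xd δ).countable_toSet.mono (Set.range_subset_iff.2 (hQ_mem δ hδ))
  exact finite_horizon_equilibrium_cost_approximation_general (S := fun δ => Ad δ i)
    (CompactSpace.uniformContinuous_of_continuous (hc i)) ⟨C, fun x b => hC (x, b) trivial⟩
    hp_prob hp_setwise (fun δ hδ => by have := hν_prob δ hδ; infer_instance)
    (fun δ hδ => ⟨hQ_meas δ hδ, hcountable δ hδ, hnear δ hδ,
      fun x => (hν_pos δ hδ _ (hQ_mem δ hδ x)).ne'⟩)
    (fun δ hδ => hAd_net δ hδ i) hquant (fun δ hδ => ⟨hπ_prob δ hδ, hπ_const δ hδ⟩)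
    (fun δ hδ => ⟨hJd_const δ hδ i, hJd_T δ hδ i,
      fun t ht x => hJd_rec δ hδ i t ht _ (hQ_mem δ hδ x),
      fun t ht x => hJd_attain δ hδ i t ht _ (hQ_mem δ hδ x)⟩)
    (fun δ hδ => ⟨hJs_T δ hδ i, hJs_rec δ hδ i⟩) (fun δ hδ => ⟨hJi_T δ hδ i, hJi_rec δ hδ i⟩) ht

end
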